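/- Let G be a finite simple graph that is d-degenerate. Then G contains no ladder of length 2d + 2. -/

import Mathlib

/-- The vertices `a 0, …, a (n-1), b 0, …, b (n-1)` form a *ladder* of length `n` in `G`:
they are pairwise distinct and `a i` is adjacent to `b j` exactly when `j < i`. -/
def SimpleGraph.IsLadder {V : Type*} (G : SimpleGraph V) (n : ℕ)
    (a b : Fin n → V) : Prop :=
  Function.Injective a ∧ Function.Injective b ∧ (∀ i j, a i ≠ b j) ∧
    ∀ i j, G.Adj (a i) (b j) ↔ j < i

/-- A graph is `d`-degenerate if it admits a linear order on its vertices in which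
every vertex has at most `d` neighbours preceding it. -/
def SimpleGraph.Degenerate {V : Type*} (G : SimpleGraph V) (d : ℕ) : Prop :=
  ∃ lo : LinearOrder V, ∀ v : V, {u : V | G.Adj u v ∧ lo.lt u v}.ncard ≤ d

/-!
In a ladder of length `2d + 2`, every `a i` in the top half is adjacent to every `b j` in the bottom
half, so these vertices form a `K_{d+1,d+1}`. In any linear order, the last vertex of this subgraph
is preceded by the whole opposite side, hence has at least `d + 1` left neighbours.
-/

section LeftDegree

variable {V : Type*} {G : SimpleGraph V} [LinearOrder V] {d : ℕ} {s t : Set V} {x y : V}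

/-- The left neighbourhood `N⁻(v)` of `v`: the neighbours of `v` that precede it. -/
def leftNeighborSet (G : SimpleGraph V) (v : V) : Set V :=
  {u | G.Adj u v ∧ u < v}

/-- The order on the vertices of `G` has left-degree at most `d`. Sizes are measured by
`Set.encard`, so that, unlike with `Set.ncard`, an infinite left neighbourhood is not small. -/
def LeftDegreeLE (G : SimpleGraph V) (d : ℕ) : Prop :=
  ∀ v, (leftNeighborSet G v).encard ≤ d

theorem subset_leftNeighborSet_or_of_isGreatest (h : G.IsCompleteBetween s t)
    (hx : IsGreatest s x) (hy : IsGreatest t y) :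
    s ⊆ leftNeighborSet G y ∨ t ⊆ leftNeighborSet G x := by
  obtain hxy | hyx := (h hx.1 hy.1).ne.lt_or_gt
  · exact .inl fun u hu ↦ ⟨h hu hy.1, (hx.2 hu).trans_lt hxy⟩
  · exact .inr fun u hu ↦ ⟨(h hx.1 hu).symm, (hy.2 hu).trans_lt hyx⟩

theorem exists_subset_lt_encard_isGreatest (h : d < s.encard) :
    ∃ s' ⊆ s, d < s'.encard ∧ ∃ m, IsGreatest s' m := by
  obtain ⟨s', hsub, hcard⟩ := Set.exists_subset_encard_eq (Order.add_one_le_of_lt h)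
  have hfin : s'.Finite := Set.finite_of_encard_eq_coe (k := d + 1) hcard
  have hne : s'.Nonempty := Set.encard_ne_zero.mp (by simp [hcard])
  obtain ⟨m, hm, hmax⟩ := Set.exists_max_image s' id hfin hne
  have hlt : d < s'.encard := by
    rw [hcard]
    exact_mod_cast d.lt_succ_self
  exact ⟨s', hsub, hlt, m, hm, hmax⟩

theorem LeftDegreeLE.encard_le_of_subset (hdeg : LeftDegreeLE G d)
    (h : s ⊆ leftNeighborSet G x) : s.encard ≤ d :=
  (Set.encard_le_encard h).trans (hdeg x)

theorem LeftDegreeLE.min_encard_le_of_isCompleteBetween (hdeg : LeftDegreeLE G d)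
    (h : G.IsCompleteBetween s t) : min s.encard t.encard ≤ d := by
  by_contra! hlt
  obtain ⟨hs_lt, ht_lt⟩ := lt_min_iff.mp hlt
  obtain ⟨s', hs, hs'_lt, x, hx⟩ := exists_subset_lt_encard_isGreatest hs_lt
  obtain ⟨t', ht, ht'_lt, y, hy⟩ := exists_subset_lt_encard_isGreatest ht_lt
  have h' : G.IsCompleteBetween s' t' := fun _ hu _ hv ↦ h (hs hu) (ht hv)
  obtain hsub | hsub := subset_leftNeighborSet_or_of_isGreatest h' hx hy
  · exact hs'_lt.not_ge (hdeg.encard_le_of_subset hsub)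
  · exact ht'_lt.not_ge (hdeg.encard_le_of_subset hsub)

end LeftDegree

theorem exists_leftDegreeLE_of_degenerate {V : Type*} [Finite V] {G : SimpleGraph V} {d : ℕ}
    (h : G.Degenerate d) : ∃ _ : LinearOrder V, LeftDegreeLE G d := by
  obtain ⟨lo, hlo⟩ := h
  refine ⟨lo, fun v ↦ ?_⟩
  rw [← (Set.toFinite _).cast_ncard_eq]
  exact_mod_cast hlo v

theorem isCompleteBetween_of_isLadder {V : Type*} {G : SimpleGraph V} {n : ℕ} {a b : Fin n → V}
    (h : G.IsLadder n a b) (k : Fin n) :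
    G.IsCompleteBetween (a '' Set.Ici k) (b '' Set.Iio k) := by
  rintro _ ⟨i, hi, rfl⟩ _ ⟨j, hj, rfl⟩
  exact (h.2.2.2 i j).mpr (lt_of_lt_of_le hj hi)

theorem no_ladder_of_degenerate_general {V : Type*} [LinearOrder V] {G : SimpleGraph V} {d n : ℕ}
    (hdeg : LeftDegreeLE G d) (hn : 2 * d + 2 ≤ n) :
    ¬ ∃ a b : Fin n → V, G.IsLadder n a b := by
  rintro ⟨a, b, hab⟩
  let k : Fin n := ⟨d + 1, by omega⟩
  have ha_card : (a '' Set.Ici k).encard = (n - (d + 1) : ℕ) := by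
    rw [hab.1.encard_image, ← Finset.coe_Ici, Set.encard_coe_eq_coe_finsetCard, Fin.card_Ici]
  have hb_card : (b '' Set.Iio k).encard = (d + 1 : ℕ) := by
    rw [hab.2.1.encard_image, ← Finset.coe_Iio, Set.encard_coe_eq_coe_finsetCard, Fin.card_Iio]
  have hmin := hdeg.min_encard_le_of_isCompleteBetween (isCompleteBetween_of_isLadder hab k)
  rw [ha_card, hb_card, min_le_iff, Nat.cast_le, Nat.cast_le] at hmin
  omega

/-- A `d`-degenerate graph contains no ladder of length `2d + 2`. -/
theorem no_ladder_of_degenerate {V : Type*} [Fintype V] (G : SimpleGraph V) (d : ℕ)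
    (hdeg : G.Degenerate d) :
    ¬ ∃ a b : Fin (2 * d + 2) → V, G.IsLadder (2 * d + 2) a b := by
  obtain ⟨_, hleft⟩ := exists_leftDegreeLE_of_degenerate hdeg
  exact no_ladder_of_degenerate_general hleft le_rfl
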